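/- arXiv:2404.09460 — 2 statements merged into one kernel-verified Lean document; each statement's English description precedes it below -/
import Mathlib

section
/- Let α > 0, R > 0, Q > 0, Z ≥ 0, let t₀ and D be natural numbers, and let z, x : ℕ → ℝ be sequences with 0 ≤ z(t) ≤ Z for all t and x(t) ≥ 0 for all t. Suppose z(t+1) ≥ z(t) + α/R − x(t) for all t ∈ {t₀, t₀+1, …, t₀+D}, and ∑_{t=t₀}^{t₀+D} x(t) < Q. Then D < R·(Q + Z)/α. -/
/-! The step inequality says that the queue increment plus the service in a slot is at least the
drift `α / R`. Summing over the `D + 1` slots telescopes the increments to at most `Z`, while the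
service contributes less than `Q`, so `(D + 1) * (α / R) < Q + Z`. -/

theorem nsmul_le_sub_add_sum_Ico {G : Type*} [AddCommGroup G] [PartialOrder G]
    [IsOrderedAddMonoid G] {c : G} {z x : ℕ → G} {m k : ℕ}
    (hstep : ∀ t ∈ Finset.Ico m (m + k), z t + c - x t ≤ z (t + 1)) :
    k • c ≤ z (m + k) - z m + ∑ t ∈ Finset.Ico m (m + k), x t := by
  have drift_le : ∀ t ∈ Finset.Ico m (m + k), c ≤ z (t + 1) - z t + x t := fun t ht ↦ by
    rw [sub_add_eq_add_sub, le_sub_iff_add_le']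
    exact sub_le_iff_le_add.mp (hstep t ht)
  calc k • c = (Finset.Ico m (m + k)).card • c := by rw [Nat.card_Ico, Nat.add_sub_cancel_left]
    _ ≤ ∑ t ∈ Finset.Ico m (m + k), (z (t + 1) - z t + x t) :=
      Finset.card_nsmul_le_sum _ _ _ drift_le
    _ = z (m + k) - z m + ∑ t ∈ Finset.Ico m (m + k), x t := by
      rw [Finset.sum_add_distrib, Finset.sum_Ico_sub z (Nat.le_add_right m k)]

theorem charging_delay_bound_general {α R Q Z : ℝ} (hα : 0 < α) (hR : 0 < R) {t₀ D : ℕ}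
    {z x : ℕ → ℝ} (hz_start : 0 ≤ z t₀) (hz_end : z (t₀ + D + 1) ≤ Z)
    (hstep : ∀ t ∈ Finset.Icc t₀ (t₀ + D), z (t + 1) ≥ z t + α / R - x t)
    (hsum : ∑ t ∈ Finset.Icc t₀ (t₀ + D), x t < Q) :
    (D : ℝ) + 1 < R * (Q + Z) / α := by
  rw [← Finset.Ico_add_one_right_eq_Icc] at hstep hsum
  have total_drift_lt : ((D : ℝ) + 1) * (α / R) < Q + Z :=
    calc ((D : ℝ) + 1) * (α / R) = (D + 1) • (α / R) := by rw [nsmul_eq_mul, Nat.cast_add_one]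
      _ ≤ z (t₀ + D + 1) - z t₀ + ∑ t ∈ Finset.Ico t₀ (t₀ + D + 1), x t :=
        nsmul_le_sub_add_sum_Ico hstep
      _ < Q + Z := by linarith
  calc (D : ℝ) + 1 < (Q + Z) / (α / R) := (lt_div_iff₀ (div_pos hα hR)).mpr total_drift_lt
    _ = R * (Q + Z) / α := by rw [div_div_eq_mul_div, mul_comm]

/-- Core of the charging-delay bound: if the virtual queue increases by at least
`α/R - x t` over each of the slots `t₀, …, t₀ + D`, stays in `[0, Z]`, and the total
service over those slots is less than `Q`, then `D < R*(Q + Z)/α`. -/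
theorem charging_delay_bound (α R Q Z : ℝ) (hα : 0 < α) (hR : 0 < R) (hQ : 0 < Q)
    (hZ : 0 ≤ Z) (t₀ D : ℕ) (z x : ℕ → ℝ)
    (hz : ∀ t, 0 ≤ z t ∧ z t ≤ Z) (hx : ∀ t, 0 ≤ x t)
    (hstep : ∀ t ∈ Finset.Icc t₀ (t₀ + D), z (t + 1) ≥ z t + α / R - x t)
    (hsum : ∑ t ∈ Finset.Icc t₀ (t₀ + D), x t < Q) :
    (D : ℝ) < R * (Q + Z) / α :=
  (lt_add_one (D : ℝ)).trans
    (charging_delay_bound_general hα hR (hz t₀).1 (hz (t₀ + D + 1)).2 hstep hsum)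
end

section
/- Fix a positive integer G, V > 0, and constants A_g ≥ 0, Q_g ≥ 0, Z_g ≥ 0, b_g ≥ 0, X̄_g ≥ 0 for g = 1,…,G. Let π : ℕ → ℝ, and for each g let a_g, X_g, x̂_g, x*_g : ℕ → ℝ be sequences with 0 ≤ a_g(t) ≤ A_g, 0 ≤ X_g(t) ≤ X̄_g, 0 ≤ x̂_g(t) ≤ X_g(t), 0 ≤ x*_g(t) ≤ X_g(t) for all t. Let the queues satisfy q_g(1) = 0, z_g(1) = 0, q_g(t+1) = max(q_g(t) − x̂_g(t), 0) + a_g(t), z_g(t+1) = max(z_g(t) + b_g·𝟙[q_g(t) > 0] − x̂_g(t), 0), and suppose q_g(t) ≤ Q_g and z_g(t) ≤ Z_g for all t. Suppose further that for every t, the vector (x̂_g(t))_g minimizes ∑_g [(V·π(t) − q_g(t) − z_g(t))·x_g + (1/2)·x_g²] over the box {0 ≤ x_g ≤ X_g(t), g = 1,…,G}. Define f̂(t) = π(t)·∑_g x̂_g(t) and f*(t) = π(t)·∑_g x*_g(t). Then for every positive integer T, (1/T) ∑_{t=1}^{T} (f̂(t) − f*(t)) ≤ M̃/V, where M̃ =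 ∑_g (A_g²/2 + Q_g·A_g + Z_g·b_g) + (1/2)∑_g max(b_g², X̄_g²) + (1/2)∑_g X̄_g². -/
/-!
The squared backlogs `L = ∑ g, (q g ^ 2 + z g ^ 2) / 2` act as a potential. In one slot, `L` grows
by at most a constant plus `∑ g, (x g ^ 2 / 2 - (q g + z g) * x g)`, so the drift of `L` plus `V`
times the cost is at most a constant plus the objective that the schedule minimizes. Replacing the
minimizer by a competitor can only raise this bound, and the backlog terms of the competitor have
the favourable sign. What remains is `V * (f̂ t - f* t) ≤ M̃ - (L (t + 1) - L t)`, which telescopes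
in `t`.
-/

open Finset

section OrderedRing

variable {R : Type*} [CommRing R] [LinearOrder R] [IsStrictOrderedRing R]

theorem sq_max_zero_le (r : R) : max r 0 ^ 2 ≤ r ^ 2 := by
  rw [← sq_abs r]
  exact pow_le_pow_left₀ (le_max_right r 0) (max_le (le_abs_self r) (abs_nonneg r)) 2

theorem sq_max_sub_add_le {q x a : R} (hq : 0 ≤ q) (hx : 0 ≤ x) (ha : 0 ≤ a) :
    (max (q - x) 0 + a) ^ 2 ≤ (q - x) ^ 2 + 2 * (q * a) + a ^ 2 := by
  have hserved : max (q - x) 0 ≤ q := max_le (sub_le_self q hx) hq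
  calc (max (q - x) 0 + a) ^ 2
      = max (q - x) 0 ^ 2 + 2 * (max (q - x) 0 * a) + a ^ 2 := by ring
    _ ≤ (q - x) ^ 2 + 2 * (q * a) + a ^ 2 := by
      gcongr ?_ + 2 * (?_ * a) + _
      exact sq_max_zero_le (q - x)

theorem sq_sub_le_max_sq {c x b B : R} (hc : c ∈ Set.Icc 0 b) (hx : x ∈ Set.Icc 0 B) :
    (c - x) ^ 2 ≤ max (b ^ 2) (B ^ 2) := by
  obtain h | h := le_total x c
  · have hcb : c - x ≤ b := (sub_le_self c hx.1).trans hc.2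
    exact le_max_of_le_left (pow_le_pow_left₀ (sub_nonneg.2 h) hcb 2)
  · have hxB : x - c ≤ B := (sub_le_self x hc.1).trans hx.2
    rw [sub_sq_comm]
    exact le_max_of_le_right (pow_le_pow_left₀ (sub_nonneg.2 h) hxB 2)

theorem mul_sum_le_of_drift_add_penalty_le {V M : R} {L f : ℕ → R}
    (h : ∀ t, 1 ≤ t → L (t + 1) - L t + V * f t ≤ M) (T : ℕ) :
    V * ∑ t ∈ Icc 1 T, f t ≤ T * M + (L 1 - L (T + 1)) := by
  induction T with
  | zero => simp
  | succ T ih =>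
    rw [sum_Icc_succ_top (Nat.le_add_left 1 T), mul_add]
    push_cast
    linarith [h (T + 1) (Nat.le_add_left 1 T)]

end OrderedRing

section OrderedField

variable {ι K : Type*} [Fintype ι] [Field K] [LinearOrder K]

/-- The quadratic Lyapunov function of the demand queues `q` and the delay queues `z`. -/
def lyapunov (q z : ι → K) : K :=
  ∑ g, (q g ^ 2 + z g ^ 2) / 2

/-- The objective of the per-slot problem P2 at price `p` and backlogs `q`, `z`, as a function of
the schedule `x`. -/
def slotObjective (V p : K) (q z x : ι → K) : K :=
  ∑ g, ((V * p - q g - z g) * x g + (1 / 2) * x g ^ 2)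

/-- The part of the constant `M̃` that bounds the Lyapunov drift; `M̃` itself also contains
`(1 / 2) * ∑ g, B g ^ 2`, where `B` is the bound `X̄` on the charging power. -/
def driftBound (A Q Z b B : ι → K) : K :=
  ∑ g, (A g ^ 2 / 2 + Q g * A g + Z g * b g) + (1 / 2) * ∑ g, max (b g ^ 2) (B g ^ 2)

variable [IsStrictOrderedRing K]

theorem lyapunov_nonneg (q z : ι → K) : 0 ≤ lyapunov q z :=
  sum_nonneg fun _ _ => by positivity

theorem demand_queue_drift_le {q x a A Q : K} (hq : q ∈ Set.Icc 0 Q) (hx : 0 ≤ x)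
    (ha : a ∈ Set.Icc 0 A) :
    (max (q - x) 0 + a) ^ 2 / 2 - q ^ 2 / 2 ≤ (1 / 2) * x ^ 2 - q * x + (A ^ 2 / 2 + Q * A) := by
  have ha_sq : a ^ 2 ≤ A ^ 2 := pow_le_pow_left₀ ha.1 ha.2 2
  have hqa : q * a ≤ Q * A := mul_le_mul hq.2 ha.2 ha.1 (hq.1.trans hq.2)
  linarith [sq_max_sub_add_le hq.1 hx ha.1]

theorem delay_queue_drift_le {z x c b B Z : K} (hz : z ∈ Set.Icc 0 Z) (hx : x ∈ Set.Icc 0 B)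
    (hc : c ∈ Set.Icc 0 b) :
    max (z + c - x) 0 ^ 2 / 2 - z ^ 2 / 2 ≤ -(z * x) + (Z * b + (1 / 2) * max (b ^ 2) (B ^ 2)) := by
  have hzc : z * c ≤ Z * b := mul_le_mul hz.2 hc.2 hc.1 (hz.1.trans hz.2)
  linarith [sq_max_zero_le (z + c - x), sq_sub_le_max_sq hc hx]

theorem lyapunov_drift_add_penalty_le {A Q Z b B q z x a c q' z' : ι → K}
    (hq : ∀ g, q g ∈ Set.Icc 0 (Q g)) (hz : ∀ g, z g ∈ Set.Icc 0 (Z g))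
    (hx : ∀ g, x g ∈ Set.Icc 0 (B g)) (ha : ∀ g, a g ∈ Set.Icc 0 (A g))
    (hc : ∀ g, c g ∈ Set.Icc 0 (b g))
    (hq' : ∀ g, q' g = max (q g - x g) 0 + a g) (hz' : ∀ g, z' g = max (z g + c g - x g) 0)
    (V p : K) :
    lyapunov q' z' - lyapunov q z + V * (p * ∑ g, x g) ≤
      driftBound A Q Z b B + slotObjective V p q z x := by
  simp only [lyapunov, driftBound, slotObjective, mul_sum, ← sum_sub_distrib, ← sum_add_distrib]
  refine sum_le_sum fun g _ => ?_
  rw [hq' g, hz' g]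
  linarith [demand_queue_drift_le (hq g) (hx g).1 (ha g), delay_queue_drift_le (hz g) (hx g) (hc g)]

theorem slotObjective_le {q z x B : ι → K} (hq : ∀ g, 0 ≤ q g) (hz : ∀ g, 0 ≤ z g)
    (hx : ∀ g, x g ∈ Set.Icc 0 (B g)) (V p : K) :
    slotObjective V p q z x ≤ V * (p * ∑ g, x g) + (1 / 2) * ∑ g, B g ^ 2 := by
  simp only [slotObjective, mul_sum, ← sum_add_distrib]
  refine sum_le_sum fun g _ => ?_
  have hx_sq : x g ^ 2 ≤ B g ^ 2 := pow_le_pow_left₀ (hx g).1 (hx g).2 2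
  linarith [mul_nonneg (hq g) (hx g).1, mul_nonneg (hz g) (hx g).1]

theorem average_le_of_drift_add_penalty_le {V M : K} (hV : 0 < V) {L f : ℕ → K}
    (hL : ∀ t, 0 ≤ L t) (h : ∀ t, 1 ≤ t → L (t + 1) - L t + V * f t ≤ M) {T : ℕ} (hT : 0 < T) :
    (1 / (T : K)) * ∑ t ∈ Icc 1 T, f t ≤ M / V + L 1 / (V * T) := by
  have hT' : (0 : K) < T := Nat.cast_pos.2 hT
  have hsum : V * ∑ t ∈ Icc 1 T, f t ≤ T * M + L 1 := by
    linarith [mul_sum_le_of_drift_add_penalty_le h T, hL (T + 1)]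
  calc (1 / (T : K)) * ∑ t ∈ Icc 1 T, f t
      = (V * ∑ t ∈ Icc 1 T, f t) / (V * T) := by field_simp [hT'.ne']
    _ ≤ (T * M + L 1) / (V * T) := by gcongr
    _ = M / V + L 1 / (V * T) := by field_simp [hT'.ne']

theorem online_optimality_gap_general {V : K} (hV : 0 < V) {A Q Z b Xbar : ι → K} (π : ℕ → K)
    {a c xhat xstar q z : ι → ℕ → K}
    (ha : ∀ g t, a g t ∈ Set.Icc 0 (A g)) (hc : ∀ g t, c g t ∈ Set.Icc 0 (b g))
    (hxhat : ∀ g t, xhat g t ∈ Set.Icc 0 (Xbar g)) (hxstar : ∀ g t, xstar g t ∈ Set.Icc 0 (Xbar g))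
    (hq1 : ∀ g, 0 ≤ q g 1) (hz1 : ∀ g, 0 ≤ z g 1)
    (hqrec : ∀ g t, 1 ≤ t → q g (t + 1) = max (q g t - xhat g t) 0 + a g t)
    (hzrec : ∀ g t, 1 ≤ t → z g (t + 1) = max (z g t + c g t - xhat g t) 0)
    (hqQ : ∀ g t, q g t ≤ Q g) (hzZ : ∀ g t, z g t ≤ Z g)
    (hobj : ∀ t, slotObjective V (π t) (q · t) (z · t) (xhat · t) ≤
      slotObjective V (π t) (q · t) (z · t) (xstar · t))
    {T : ℕ} (hT : 0 < T) :
    (1 / (T : K)) * ∑ t ∈ Icc 1 T, (π t * ∑ g, xhat g t - π t * ∑ g, xstar g t) ≤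
      (driftBound A Q Z b Xbar + (1 / 2) * ∑ g, Xbar g ^ 2) / V +
        lyapunov (q · 1) (z · 1) / (V * T) := by
  have hq (g t) (ht : 1 ≤ t) : 0 ≤ q g t := by
    refine Nat.le_induction (hq1 g) (fun s hs _ => ?_) t ht
    rw [hqrec g s hs]
    exact add_nonneg (le_max_right _ _) (ha g s).1
  have hz (g t) (ht : 1 ≤ t) : 0 ≤ z g t := by
    refine Nat.le_induction (hz1 g) (fun s hs _ => ?_) t ht
    rw [hzrec g s hs]
    exact le_max_right _ _
  refine average_le_of_drift_add_penalty_le (L := fun t => lyapunov (q · t) (z · t)) hV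
    (fun t => lyapunov_nonneg _ _) (fun t ht => ?_) hT
  have hdrift := lyapunov_drift_add_penalty_le (fun g => ⟨hq g t ht, hqQ g t⟩)
    (fun g => ⟨hz g t ht, hzZ g t⟩) (hxhat · t) (ha · t) (hc · t) (hqrec · t ht) (hzrec · t ht)
    V (π t)
  have hcompetitor := slotObjective_le (hq · t ht) (hz · t ht) (hxstar · t) V (π t)
  linarith [hobj t]

end OrderedField

/-- Deterministic form of Proposition 1 (optimality gap of the online
drift-plus-penalty algorithm): the time-averaged cost of the online schedule `x̂`
exceeds that of any feasible schedule `x*` by at most `M̃ / V`. -/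
theorem online_optimality_gap (G : ℕ) (hG : 0 < G) (V : ℝ) (hV : 0 < V)
    (A Q Z b Xbar : Fin G → ℝ)
    (hA : ∀ g, 0 ≤ A g) (hQ : ∀ g, 0 ≤ Q g) (hZ : ∀ g, 0 ≤ Z g)
    (hb : ∀ g, 0 ≤ b g) (hXbar : ∀ g, 0 ≤ Xbar g)
    (π : ℕ → ℝ) (a X xhat xstar q z : Fin G → ℕ → ℝ)
    (ha : ∀ g t, 0 ≤ a g t ∧ a g t ≤ A g)
    (hX : ∀ g t, 0 ≤ X g t ∧ X g t ≤ Xbar g)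
    (hxhat : ∀ g t, 0 ≤ xhat g t ∧ xhat g t ≤ X g t)
    (hxstar : ∀ g t, 0 ≤ xstar g t ∧ xstar g t ≤ X g t)
    (hq1 : ∀ g, q g 1 = 0) (hz1 : ∀ g, z g 1 = 0)
    (hqrec : ∀ g, ∀ t, 1 ≤ t → q g (t + 1) = max (q g t - xhat g t) 0 + a g t)
    (hzrec : ∀ g, ∀ t, 1 ≤ t →
      z g (t + 1) = max (z g t + b g * (if 0 < q g t then (1 : ℝ) else 0) - xhat g t) 0)
    (hqQ : ∀ g t, q g t ≤ Q g) (hzZ : ∀ g t, z g t ≤ Z g)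
    (hmin : ∀ t, ∀ y : Fin G → ℝ, (∀ g, 0 ≤ y g ∧ y g ≤ X g t) →
      ∑ g, ((V * π t - q g t - z g t) * xhat g t + (1 / 2) * (xhat g t) ^ 2) ≤
      ∑ g, ((V * π t - q g t - z g t) * y g + (1 / 2) * (y g) ^ 2)) :
    ∀ T : ℕ, 0 < T →
      (1 / (T : ℝ)) * ∑ t ∈ Finset.Icc 1 T,
          (π t * ∑ g, xhat g t - π t * ∑ g, xstar g t) ≤
      (∑ g, ((A g) ^ 2 / 2 + Q g * A g + Z g * b g) +
        (1 / 2) * ∑ g, max ((b g) ^ 2) ((Xbar g) ^ 2) +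
        (1 / 2) * ∑ g, (Xbar g) ^ 2) / V := by
  intro T hT
  have hdelay (g t) : b g * (if 0 < q g t then (1 : ℝ) else 0) ∈ Set.Icc 0 (b g) := by
    split_ifs <;> simp [hb g]
  have hxhatBar (g t) : xhat g t ∈ Set.Icc 0 (Xbar g) :=
    ⟨(hxhat g t).1, (hxhat g t).2.trans (hX g t).2⟩
  have hxstarBar (g t) : xstar g t ∈ Set.Icc 0 (Xbar g) :=
    ⟨(hxstar g t).1, (hxstar g t).2.trans (hX g t).2⟩
  have hgap := online_optimality_gap_general hV π ha hdelay hxhatBar hxstarBar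
    (fun g => (hq1 g).ge) (fun g => (hz1 g).ge) hqrec hzrec hqQ hzZ
    (fun t => hmin t (xstar · t) (hxstar · t)) hT
  exact hgap.trans_eq (by simp [driftBound, lyapunov, hq1, hz1])
end
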